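/- arXiv:2203.03129 — 2 statements merged into one kernel-verified Lean document; each statement's English description precedes it below -/
import Mathlib

section
/- Let X be a nonempty compact topological space, let I = [0,1] denote the unit interval, let g₁, g₂ : X → I be continuous surjections, and let h : X ≃ₜ X be a homeomorphism such that for every t ∈ I there exists s ∈ I with h '' (g₁⁻¹ {t}) = g₂⁻¹ {s}. Then there exists a function f : I → I such that h '' (g₁⁻¹ {t}) = g₂⁻¹ {f t} for every t ∈ I, and f is a continuous bijection of I onto I that is either strictly monotone increasing or strictly monotone decreasing; in particular, for all s, t ∈ I with s ≤ t, either f(s) ≤ f(t) for all such pairs or f(s) ≥ f(t) for all such pairs. -/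
/-!
The induced map `f` satisfies `f ∘ g₁ = g₂ ∘ h`. As `X` is compact and `[0,1]` is Hausdorff, `g₁` is
a closed surjection, hence a quotient map, so continuity of `g₂ ∘ h` passes to `f`. Surjectivity of
`f` comes from that of `g₂ ∘ h`; it is injective because the preimage under `h` of a fiber of `g₂`
lies in a single fiber of `g₁`. A continuous injection of a compact interval is strictly monotone or
strictly antitone.
-/

open unitInterval

/-- A self-homeomorphism carrying fibers of one continuous surjection onto
`[0,1]` to fibers of another induces a continuous bijection of `[0,1]` which
is strictly monotone increasing or strictly monotone decreasing; in
particular it either preserves or reverses the order. -/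
theorem fiber_map_monotone_or_antitone
    {X : Type*} [TopologicalSpace X] [CompactSpace X] [Nonempty X]
    (g₁ g₂ : X → unitInterval) (hg₁ : Continuous g₁) (hg₂ : Continuous g₂)
    (hg₁s : Function.Surjective g₁) (hg₂s : Function.Surjective g₂)
    (h : X ≃ₜ X)
    (hfib : ∀ t : unitInterval, ∃ s : unitInterval, h '' (g₁ ⁻¹' {t}) = g₂ ⁻¹' {s}) :
    ∃ f : unitInterval → unitInterval,
      (∀ t : unitInterval, h '' (g₁ ⁻¹' {t}) = g₂ ⁻¹' {f t}) ∧
      Continuous f ∧ Function.Bijective f ∧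
      (StrictMono f ∨ StrictAnti f) ∧
      ((∀ s t : unitInterval, s ≤ t → f s ≤ f t) ∨
       (∀ s t : unitInterval, s ≤ t → f t ≤ f s)) := by
  choose f hf using hfib
  have hfg : ∀ x, f (g₁ x) = g₂ (h x) := fun x => by
    have hx : h x ∈ h '' (g₁ ⁻¹' {g₁ x}) := ⟨x, rfl, rfl⟩
    rw [hf] at hx
    exact hx.symm
  have hcont : Continuous f := by
    rw [(hg₁.isClosedMap.isQuotientMap hg₁ hg₁s).continuous_iff]
    have hcomp : f ∘ g₁ = g₂ ∘ h := funext hfg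
    rw [hcomp]
    exact hg₂.comp h.continuous
  have hinj : Function.Injective f := fun s t hst => by
    have himg : h '' (g₁ ⁻¹' {s}) = h '' (g₁ ⁻¹' {t}) := by rw [hf, hf, hst]
    have hpre := h.injective.image_injective himg
    exact Set.singleton_injective (hg₁s.preimage_injective hpre)
  have hsurj : Function.Surjective f := fun s => by
    obtain ⟨y, rfl⟩ := hg₂s s
    exact ⟨g₁ (h.symm y), by rw [hfg, h.apply_symm_apply]⟩
  have hmono : StrictMono f ∨ StrictAnti f :=
    hcont.strictMono_of_inj_boundedOrder' hinj
  exact ⟨f, hf, hcont, ⟨hinj, hsurj⟩, hmono,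
    hmono.imp (fun hm _ _ hst => hm.monotone hst) (fun hm _ _ hst => hm.antitone hst)⟩
end

section
/- Let E = {0} × [0,1] ⊆ ℝ². For each i ∈ ℕ let γᵢ : [0,1] → ℝ² be an injective continuous map with range Aᵢ, such that the Hausdorff distance between Aᵢ and E tends to 0 as i → ∞, and such that for each i the map s ↦ (γᵢ(s)).2 (the second coordinate of γᵢ) is injective. Let h : ℝ² ≃ₜ ℝ² be a homeomorphism of the plane onto itself with h '' E = E. For t ∈ [0,1] and i ∈ ℕ, let S(t,i) = {s ∈ [0,1] | (h(γᵢ(s))).2 = t}, and let C(t,i) = (h ∘ γᵢ) '' [sInf S(t,i), sSup S(t,i)] if S(t,i) is nonempty and C(t,i) = ∅ otherwise (so C(t,i) is the maximal subarc of h(Aᵢ) both of whose endpoints lie on the horizontal line y = t). Then for every t ∈ [0,1], the diameter of C(t,i) tends to 0 as i → ∞. -/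
/-!
Let `e ∈ E` be the unique point of `E` that `h` sends to `(0, t)`. By compactness of `E`, a point
close enough to `E` which `h` maps to the line `y = t` is close to `e`
(`exists_thickening_near_point`). For large `i` this applies to the two endpoints of the subarc of
`Aᵢ` that `h` maps onto `C t i`. The second coordinate is monotone along `Aᵢ`, so on the whole
subarc it lies between its values at the endpoints, hence close to `e.2`; and the first coordinate
is small because `Aᵢ` is close to `E`. So the subarc lies in a small ball around `e`, and
continuity of `h` at `e` makes the diameter of its image small.
-/

open Filter Metric Set

/-- The left vertical arc `E = {0} × [0,1]` in the plane. -/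
def Evert : Set (ℝ × ℝ) := {0} ×ˢ Icc (0 : ℝ) 1

/-- Points sufficiently close to `E` that `h` maps to the line `y = t` are close to `e`. -/
lemma exists_thickening_near_point (h : (ℝ × ℝ) ≃ₜ (ℝ × ℝ)) (hE : h '' Evert = Evert)
    {t : ℝ} {e : ℝ × ℝ} (he : h e = (0, t)) {δ : ℝ} (hδ : 0 < δ) :
    ∃ η > 0, ∀ x ∈ thickening η Evert, (h x).2 = t → dist x e < δ := by
  have hcomp : IsCompact Evert := isCompact_singleton.prod isCompact_Icc
  have hclosed : IsClosed {x : ℝ × ℝ | (h x).2 = t ∧ δ ≤ dist x e} :=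
    (isClosed_eq (continuous_snd.comp h.continuous) continuous_const).inter
      (isClosed_le continuous_const (continuous_id.dist continuous_const))
  obtain ⟨η, hη, hsub⟩ := hcomp.exists_thickening_subset_open hclosed.isOpen_compl (by
    rintro x hx ⟨hxt, hxd⟩
    have hx1 : h x ∈ Evert := hE ▸ mem_image_of_mem h hx
    have hxe : x = e := h.injective (by
      rw [he]
      exact Prod.ext hx1.1 hxt)
    rw [hxe, dist_self] at hxd
    linarith)
  exact ⟨η, hη, fun x hx hxt => not_le.1 fun hd => hsub hx ⟨hxt, hd⟩⟩

/-- A continuous injective function on an interval takes values between those at the ends of any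
subinterval, so it stays as close to `u` there as it is at those ends. -/
lemma abs_sub_lt_of_injOn {f : ℝ → ℝ} (hf : ContinuousOn f (Icc 0 1)) (hinj : InjOn f (Icc 0 1))
    {a b s u δ : ℝ} (ha : a ∈ Icc (0 : ℝ) 1) (hb : b ∈ Icc (0 : ℝ) 1) (hs : s ∈ Icc a b)
    (hua : |f a - u| < δ) (hub : |f b - u| < δ) : |f s - u| < δ := by
  have hs1 : s ∈ Icc (0 : ℝ) 1 := ⟨ha.1.trans hs.1, hs.2.trans hb.2⟩
  rw [abs_lt] at *
  rcases hf.strictMonoOn_of_injOn_Icc' zero_le_one hinj with hm | hm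
  · have h1 := hm.monotoneOn ha hs1 hs.1
    have h2 := hm.monotoneOn hs1 hb hs.2
    constructor <;> linarith
  · have h1 := hm.antitoneOn ha hs1 hs.1
    have h2 := hm.antitoneOn hs1 hb hs.2
    constructor <;> linarith

/-- The "small bends" lemma: if arcs `Aᵢ` (graphs over the `y`-axis)
converge to `E = {0} × [0,1]` and `h` is a plane homeomorphism fixing `E`
setwise, then the maximal subarcs of `h(Aᵢ)` with both endpoints on a fixed
horizontal line `y = t` have diameters tending to `0`. -/
theorem small_bends
    (γ : ℕ → ℝ → ℝ × ℝ)
    (hγc : ∀ i, ContinuousOn (γ i) (Icc (0 : ℝ) 1))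
    (hγinj : ∀ i, InjOn (γ i) (Icc (0 : ℝ) 1))
    (hconv : Tendsto (fun i => hausdorffDist (γ i '' Icc (0 : ℝ) 1) Evert)
      atTop (nhds 0))
    (hproj : ∀ i, InjOn (fun s => (γ i s).2) (Icc (0 : ℝ) 1))
    (h : (ℝ × ℝ) ≃ₜ (ℝ × ℝ)) (hE : h '' Evert = Evert)
    (S : ℝ → ℕ → Set ℝ)
    (hS : ∀ t i, S t i = {s ∈ Icc (0 : ℝ) 1 | (h (γ i s)).2 = t})
    (C : ℝ → ℕ → Set (ℝ × ℝ))
    (hC₁ : ∀ t i, (S t i).Nonempty →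
      C t i = (fun s => h (γ i s)) '' Icc (sInf (S t i)) (sSup (S t i)))
    (hC₂ : ∀ t i, ¬ (S t i).Nonempty → C t i = ∅) :
    ∀ t ∈ Icc (0 : ℝ) 1, Tendsto (fun i => diam (C t i)) atTop (nhds 0) := by
  intro t ht
  have hEt : ((0 : ℝ), t) ∈ h '' Evert := by
    rw [hE]
    exact ⟨rfl, ht⟩
  obtain ⟨e, heE, he⟩ := hEt
  have he1 : e.1 = 0 := heE.1
  rw [Metric.tendsto_nhds]
  intro ε hε
  obtain ⟨δ, hδ, hδh⟩ := Metric.continuousAt_iff.1 h.continuous.continuousAt (ε / 3) (by linarith)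
  obtain ⟨η, hη, hηδ⟩ := exists_thickening_near_point h hE he hδ
  have hcomp : IsCompact Evert := isCompact_singleton.prod isCompact_Icc
  filter_upwards [hconv.eventually (gt_mem_nhds (lt_min hη hδ))] with i hi
  have hdiam : diam (C t i) ≤ 2 * (ε / 3) := by
    by_cases hne : (S t i).Nonempty
    · have hcont : ContinuousOn (fun s => (h (γ i s)).2) (Icc (0 : ℝ) 1) :=
        continuous_snd.comp_continuousOn (h.continuous.comp_continuousOn (hγc i))
      have hSc : IsCompact (S t i) := by
        rw [hS]
        exact isCompact_Icc.of_isClosed_subset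
          (hcont.preimage_isClosed_of_isClosed isClosed_Icc (isClosed_singleton (x := t)))
          (fun x hx => hx.1)
      have ha := hSc.sInf_mem hne
      have hb := hSc.sSup_mem hne
      rw [hC₁ t i hne]
      generalize sInf (S t i) = a at ha ⊢
      generalize sSup (S t i) = b at hb ⊢
      rw [hS] at ha hb
      -- Finiteness of the extended distance, so that `hausdorffDist` is not a junk value.
      have hfin : hausdorffEDist (γ i '' Icc (0 : ℝ) 1) Evert ≠ ⊤ :=
        hausdorffEDist_ne_top_of_nonempty_of_bounded ⟨_, mem_image_of_mem _ ha.1⟩ ⟨e, heE⟩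
          (isCompact_Icc.image_of_continuousOn (hγc i)).isBounded hcomp.isBounded
      have hnear : ∀ s ∈ Icc (0 : ℝ) 1, ∃ y ∈ Evert, dist (γ i s) y < min η δ := fun s hs =>
        exists_dist_lt_of_hausdorffDist_lt (mem_image_of_mem _ hs) hi hfin
      have hend : ∀ s ∈ Icc (0 : ℝ) 1, (h (γ i s)).2 = t → |(γ i s).2 - e.2| < δ := by
        intro s hs hst
        obtain ⟨y, hy, hd⟩ := hnear s hs
        have hlt := hηδ _ (mem_thickening_iff.2 ⟨y, hy, hd.trans_le (min_le_left _ _)⟩) hst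
        rw [Prod.dist_eq] at hlt
        rw [← Real.dist_eq]
        exact (le_max_right _ _).trans_lt hlt
      have hball : (fun s => h (γ i s)) '' Icc a b ⊆ closedBall (h e) (ε / 3) := by
        rintro _ ⟨s, hs, rfl⟩
        obtain ⟨y, hy, hd⟩ := hnear s ⟨ha.1.1.trans hs.1, hs.2.trans hb.1.2⟩
        have hlt := hd.trans_le (min_le_right _ _)
        rw [Prod.dist_eq] at hlt
        have hy1 : y.1 = e.1 := he1 ▸ hy.1
        refine (hδh ?_).le
        rw [Prod.dist_eq]
        refine max_lt ?_ ?_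
        · rw [← hy1]
          exact (le_max_left _ _).trans_lt hlt
        · rw [Real.dist_eq]
          exact abs_sub_lt_of_injOn (continuous_snd.comp_continuousOn (hγc i)) (hproj i) ha.1 hb.1
            hs (hend a ha.1 ha.2) (hend b hb.1 hb.2)
      exact (diam_mono hball isBounded_closedBall).trans (diam_closedBall (by linarith))
    · rw [hC₂ t i hne, diam_empty]
      linarith
  rw [Real.dist_eq, sub_zero, abs_of_nonneg diam_nonneg]
  linarith
end
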